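/- There are no positive integers a and b satisfying a^a = (2b)^b. -/

import Mathlib

/-! If `a ^ a = (2 * b) ^ b`, then `b < a`, since `a ≤ b` would give `a ^ a ≤ b ^ b < (2 * b) ^ b`.
For every prime `p`, taking `p`-adic valuations gives `a * v a = b * (v 2 + v b)` with `v 2 ≤ 1`;
because `b < a`, this forces `v a < 1 + v b`, i.e. `v a ≤ v b`. Hence `a ∣ b`, contradicting
`b < a`. -/

/-- There are no positive integers `a` and `b` satisfying `a^a = (2b)^b`. -/
theorem no_solution_a_pow_a_eq_two_b_pow_b :
    ¬ ∃ a b : ℕ, 0 < a ∧ 0 < b ∧ a ^ a = (2 * b) ^ b := by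
  rintro ⟨a, b, ha, hb, h⟩
  have hba : b < a := by
    by_contra! hab
    have h1 : a ^ a ≤ b ^ b :=
      (Nat.pow_le_pow_left hab a).trans (Nat.pow_le_pow_right hb hab)
    have h2 : b ^ b < (2 * b) ^ b := Nat.pow_lt_pow_left (by omega) hb.ne'
    omega
  have hdvd : a ∣ b := by
    rw [← Nat.factorization_le_iff_dvd ha.ne' hb.ne']
    intro p
    have hv := congrArg (fun n => n.factorization p) h
    simp only [Nat.factorization_pow, Nat.factorization_mul two_ne_zero hb.ne',
      Finsupp.smul_apply, Finsupp.add_apply, smul_eq_mul] at hv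
    have h2 : (Nat.factorization 2) p ≤ 1 := by
      rw [Nat.prime_two.factorization, Finsupp.single_apply]
      split_ifs <;> simp
    by_contra! hlt
    nlinarith
  exact absurd (Nat.le_of_dvd hb hdvd) (by omega)
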